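/- arXiv:2602.11788 — 2 statements merged into one kernel-verified Lean document; each statement's English description precedes it below -/
import Mathlib

section
/- Let q be a prime power, n a positive integer coprime to q, γ ∈ ZMod n, τ = |c_{n/q}(γ)|, and d a positive divisor of n. Then the image of d in ZMod n satisfies d + c_{n/q}(γ) = c_{n/q}(γ) if and only if n/d divides τ and ω_γ divides d·τ/n. Moreover, in that case, setting t = d·τ/n, the unique partition of c_{n/q}(γ) into equal-difference sets with common difference d is c_{n/q}(γ) = ⋃_{i=0}^{t−1} c_{n/q^t}(γ·q^i), a disjoint union of q^t-cyclotomic cosets. -/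
theorem dvd_mul_sub_one_of_dvd_pow_sub_one {N : ℕ} {Q : ℤ}
    (hrad : ∀ p : ℕ, p.Prime → p ∣ N → (p : ℤ) ∣ Q - 1) (h8 : 8 ∣ N → (4 : ℤ) ∣ Q - 1)
    {k : ℕ} (hk : (N : ℤ) ∣ Q ^ k - 1) : (N : ℤ) ∣ k * (Q - 1) := by
  rw [Int.natCast_dvd, Nat.dvd_iff_prime_pow_dvd_dvd]
  intro p j hp hpj
  rw [← Int.natCast_dvd, Nat.cast_pow]
  rcases Nat.eq_zero_or_pos j with rfl | hj
  · simp
  have hpN : p ∣ N := (dvd_pow_self p hj.ne').trans hpj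
  have hpQ := hrad p hp hpN
  have hndvd : ¬ (p : ℤ) ∣ Q := fun h => by
    have h1 : (p : ℤ) ∣ 1 := by simpa using dvd_sub h hpQ
    exact hp.one_lt.ne' (by exact_mod_cast Int.eq_one_of_dvd_one (by positivity) h1)
  have hpk : (p : ℤ) ^ j ∣ Q ^ k - 1 := by
    refine dvd_trans ?_ hk
    exact_mod_cast hpj
  rcases hp.eq_two_or_odd' with rfl | hodd
  · by_cases h4 : (4 : ℤ) ∣ Q - 1
    · have := Int.two_pow_sub_pow' (x := Q) (y := 1) k h4 (by exact_mod_cast hndvd)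
      rw [one_pow] at this
      push_cast at hpk ⊢
      rw [pow_dvd_iff_le_emultiplicity] at hpk ⊢
      rw [emultiplicity_mul Int.prime_two, add_comm]
      rwa [this] at hpk
    · have hj2 : j ≤ 2 := by
        by_contra! hj3
        exact h4 (h8 ((pow_dvd_pow 2 hj3).trans hpj))
      obtain rfl | rfl : j = 1 ∨ j = 2 := by omega
      · simpa using hpQ.mul_left _
      · push_cast at hpk hpQ ⊢
        rcases Nat.even_or_odd k with ⟨l, rfl⟩ | ⟨l, rfl⟩
        · obtain ⟨c, hc⟩ := hpQ
          exact ⟨l * c, by rw [hc]; push_cast; ring⟩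
        · exfalso
          have hQ : Q % 4 = 3 := by omega
          have h1 : Q ^ 2 ≡ 1 [ZMOD 4] := by
            have : Q ≡ 3 [ZMOD 4] := hQ
            exact this.pow 2
          have h2 : Q ^ (2 * l + 1) ≡ Q [ZMOD 4] := by
            rw [pow_succ, pow_mul]
            simpa using (h1.pow l).mul_right Q
          have h3 : Q ^ (2 * l + 1) % 4 = Q % 4 := h2
          omega
  · have := Int.emultiplicity_pow_sub_pow hp hodd (x := Q) (y := 1) hpQ hndvd k
    rw [one_pow] at this
    rw [pow_dvd_iff_le_emultiplicity] at hpk ⊢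
    rw [emultiplicity_mul (Nat.prime_iff_prime_int.mp hp), Int.natCast_emultiplicity, add_comm]
    rwa [this] at hpk

theorem mem_zmultiples_iff_addOrderOf_nsmul_eq_zero {G : Type*} [AddGroup G] [Finite G]
    [IsAddCyclic G] {x y : G} : x ∈ AddSubgroup.zmultiples y ↔ addOrderOf y • x = 0 := by
  classical
  have := Fintype.ofFinite G
  have hsub : (AddSubgroup.zmultiples y : Set G) ⊆ {a | addOrderOf y • a = 0} := fun a ha =>
    addOrderOf_dvd_iff_nsmul_eq_zero.mp (addOrderOf_dvd_of_mem_zmultiples ha)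
  have heq : (AddSubgroup.zmultiples y : Set G) = {a | addOrderOf y • a = 0} := by
    refine Set.eq_of_subset_of_ncard_le hsub ?_
    calc {a : G | addOrderOf y • a = 0}.ncard
        = (Finset.univ.filter fun a : G => addOrderOf y • a = 0).card := by
          rw [← Set.ncard_coe_finset]; simp
      _ ≤ addOrderOf y := IsAddCyclic.card_nsmul_eq_zero_le (addOrderOf_pos y)
      _ = (AddSubgroup.zmultiples y : Set G).ncard := by
          rw [← Nat.card_coe_set_eq]; exact (Nat.card_zmultiples y).symm
  rw [← SetLike.mem_coe, heq, Set.mem_ofPred_eq]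

theorem ncard_add_image_zmultiples {G : Type*} [AddGroup G] (x y : G) :
    ((x + ·) '' (AddSubgroup.zmultiples y : Set G)).ncard = addOrderOf y := by
  rw [Set.ncard_image_of_injective _ (add_right_injective x), ← Nat.card_coe_set_eq]
  exact Nat.card_zmultiples y

theorem orderOf_natCast_pos {m q : ℕ} (hm : 0 < m) (h : m.Coprime q) :
    0 < orderOf (q : ZMod m) := by
  have : NeZero m := ⟨hm.ne'⟩
  rw [← ZMod.coe_unitOfCoprime q h.symm, orderOf_units]
  exact orderOf_pos _

theorem natCast_pow_modEq_pow_iff {m q : ℕ} (h : m.Coprime q) {i j : ℕ} :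
    q ^ i ≡ q ^ j [MOD m] ↔ i ≡ j [MOD orderOf (q : ZMod m)] := by
  rw [← ZMod.natCast_eq_natCast_iff, ← ZMod.coe_unitOfCoprime q h.symm, orderOf_units,
    ← pow_eq_pow_iff_modEq, Units.ext_iff]
  simp

theorem natCast_pow_modEq_one_iff {m q : ℕ} {i : ℕ} :
    q ^ i ≡ 1 [MOD m] ↔ orderOf (q : ZMod m) ∣ i := by
  rw [← ZMod.natCast_eq_natCast_iff, orderOf_dvd_iff_pow_eq_one]
  simp

theorem ZMod.mul_natCast_eq_mul_natCast_iff {n : ℕ} (γ : ZMod n) (a b : ℕ) :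
    γ * a = γ * b ↔ a ≡ b [MOD addOrderOf γ] := by
  rw [← nsmul_eq_nsmul_iff_modEq, nsmul_eq_mul, nsmul_eq_mul, mul_comm γ, mul_comm γ]

theorem ZMod.addOrderOf_dvd_self {n : ℕ} (γ : ZMod n) : addOrderOf γ ∣ n :=
  addOrderOf_dvd_iff_nsmul_eq_zero.mpr (by simp)

section Coset

variable {n q : ℕ}

theorem ZMod.mul_pow_eq_mul_pow_iff (hco : n.Coprime q) (γ : ZMod n) {i j : ℕ} :
    γ * (q : ZMod n) ^ i = γ * (q : ZMod n) ^ j ↔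
      i ≡ j [MOD orderOf (q : ZMod (addOrderOf γ))] := by
  rw [← natCast_pow_modEq_pow_iff (hco.coprime_dvd_left (ZMod.addOrderOf_dvd_self γ)),
    ← ZMod.mul_natCast_eq_mul_natCast_iff]
  simp

theorem ZMod.mul_natCast_mem_add_zmultiples_iff [NeZero n] (γ δ : ZMod n) {a b : ℕ} :
    γ * a ∈ (γ * b + ·) '' (AddSubgroup.zmultiples δ : Set (ZMod n)) ↔
      addOrderOf δ * a ≡ addOrderOf δ * b [MOD addOrderOf γ] := by
  rw [Set.image_add_left, Set.mem_preimage, SetLike.mem_coe,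
    mem_zmultiples_iff_addOrderOf_nsmul_eq_zero, ← ZMod.mul_natCast_eq_mul_natCast_iff,
    nsmul_eq_mul, ← sub_eq_zero (b := γ * ((addOrderOf δ * b : ℕ) : ZMod n))]
  push_cast
  ring_nf

theorem ZMod.self_mem_cyclotomicCoset {γ : ZMod n} :
    γ ∈ {x : ZMod n | ∃ i : ℕ, x = γ * (q : ZMod n) ^ i} := ⟨0, by simp⟩

theorem ZMod.card_cyclotomicCoset (hn : 0 < n) (hco : n.Coprime q) (γ : ZMod n) :
    Nat.card {x : ZMod n | ∃ i : ℕ, x = γ * (q : ZMod n) ^ i} =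
      orderOf (q : ZMod (addOrderOf γ)) := by
  have : NeZero n := ⟨hn.ne'⟩
  set τ := orderOf (q : ZMod (addOrderOf γ)) with hτ
  have hpos : 0 < τ := orderOf_natCast_pos (addOrderOf_pos γ)
    (hco.coprime_dvd_left (ZMod.addOrderOf_dvd_self γ))
  have hC : {x : ZMod n | ∃ i : ℕ, x = γ * (q : ZMod n) ^ i} =
      (fun i : ℕ => γ * (q : ZMod n) ^ i) '' (Finset.range τ : Set ℕ) := by
    ext x
    constructor
    · rintro ⟨i, rfl⟩
      exact ⟨i % τ, by simpa using Nat.mod_lt i hpos,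
        (ZMod.mul_pow_eq_mul_pow_iff hco γ).mpr (Nat.mod_modEq i τ)⟩
    · rintro ⟨i, -, rfl⟩
      exact ⟨i, rfl⟩
  have hinj : Set.InjOn (fun i : ℕ => γ * (q : ZMod n) ^ i) (Finset.range τ : Set ℕ) := by
    intro i hi j hj hij
    exact ((ZMod.mul_pow_eq_mul_pow_iff hco γ).mp hij).eq_of_lt_of_lt (by simpa using hi)
      (by simpa using hj)
  rw [Nat.card_coe_set_eq, hC, hinj.ncard_image, Set.ncard_coe_finset, Finset.card_range]

/-- If the coset of `γ` has `ord δ * t` elements and `ord γ` divides `ord δ * (q ^ t - 1)`, then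
the `q ^ t`-cyclotomic coset of `γ * q ^ i` is a translate of `⟨δ⟩`. -/
theorem ZMod.cyclotomicCoset_pow_eq_add_zmultiples [NeZero n] (hco : n.Coprime q) (γ δ : ZMod n)
    {t : ℕ} (hτ : orderOf (q : ZMod (addOrderOf γ)) = addOrderOf δ * t)
    (ht : addOrderOf δ * q ^ t ≡ addOrderOf δ [MOD addOrderOf γ]) (i : ℕ) :
    {x : ZMod n | ∃ k : ℕ, x = γ * (q : ZMod n) ^ i * ((q : ZMod n) ^ t) ^ k} =
      (γ * (q : ZMod n) ^ i + ·) '' (AddSubgroup.zmultiples δ : Set (ZMod n)) := by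
  have hcoγ := hco.coprime_dvd_left (ZMod.addOrderOf_dvd_self γ)
  have hpos := orderOf_natCast_pos (addOrderOf_pos γ) hcoγ
  rw [hτ] at hpos
  have htpos : 0 < t := Nat.pos_of_mul_pos_left hpos
  have hk (k : ℕ) : addOrderOf δ * (q ^ t) ^ k ≡ addOrderOf δ [MOD addOrderOf γ] := by
    induction k with
    | zero => simpa using Nat.ModEq.refl _
    | succ k ih =>
      rw [pow_succ, ← mul_assoc]
      exact (ih.mul_right _).trans ht
  have hterm (k : ℕ) : γ * (q : ZMod n) ^ i * ((q : ZMod n) ^ t) ^ k =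
      γ * (q : ZMod n) ^ (i + t * k) := by
    rw [pow_add, pow_mul, mul_assoc]
  refine Set.eq_of_subset_of_ncard_le ?_ ?_
  · rintro _ ⟨k, rfl⟩
    have := (ZMod.mul_natCast_mem_add_zmultiples_iff γ δ
      (a := q ^ i * (q ^ t) ^ k) (b := q ^ i)).mpr (by
      rw [mul_left_comm, mul_comm (addOrderOf δ) (q ^ i)]
      exact (hk k).mul_left _)
    push_cast at this
    rwa [← mul_assoc] at this
  · have hinj : Set.InjOn (fun k : ℕ => γ * (q : ZMod n) ^ i * ((q : ZMod n) ^ t) ^ k)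
        (Finset.range (addOrderOf δ) : Set ℕ) := by
      intro k hk l hl hkl
      simp only [hterm] at hkl
      rw [ZMod.mul_pow_eq_mul_pow_iff hco, hτ, mul_comm (addOrderOf δ)] at hkl
      exact (Nat.ModEq.mul_left_cancel' htpos.ne'
        (Nat.ModEq.add_left_cancel' i hkl)).eq_of_lt_of_lt (by simpa using hk) (by simpa using hl)
    rw [ncard_add_image_zmultiples]
    calc addOrderOf δ = ((fun k : ℕ => γ * (q : ZMod n) ^ i * ((q : ZMod n) ^ t) ^ k) ''
          (Finset.range (addOrderOf δ) : Set ℕ)).ncard := by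
          rw [hinj.ncard_image, Set.ncard_coe_finset, Finset.card_range]
      _ ≤ _ := by
          refine Set.ncard_le_ncard ?_
          rintro _ ⟨k, -, rfl⟩
          exact ⟨k, rfl⟩

theorem ZMod.add_image_cyclotomicCoset_of_modEq [NeZero n] (hco : n.Coprime q) (γ δ : ZMod n)
    {t : ℕ} (hτ : orderOf (q : ZMod (addOrderOf γ)) = addOrderOf δ * t)
    (ht : addOrderOf δ * q ^ t ≡ addOrderOf δ [MOD addOrderOf γ]) :
    (δ + ·) '' {x : ZMod n | ∃ i : ℕ, x = γ * (q : ZMod n) ^ i} =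
      {x : ZMod n | ∃ i : ℕ, x = γ * (q : ZMod n) ^ i} := by
  refine Set.eq_of_subset_of_ncard_le ?_
    (Set.ncard_image_of_injective _ (add_right_injective δ)).ge
  rintro _ ⟨_, ⟨i, rfl⟩, rfl⟩
  have hmem : δ + γ * (q : ZMod n) ^ i ∈
      (γ * (q : ZMod n) ^ i + ·) '' (AddSubgroup.zmultiples δ : Set (ZMod n)) :=
    ⟨δ, AddSubgroup.mem_zmultiples δ, add_comm _ _⟩
  rw [← ZMod.cyclotomicCoset_pow_eq_add_zmultiples hco γ δ hτ ht i] at hmem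
  obtain ⟨k, hk⟩ := hmem
  exact ⟨i + t * k, by simpa [pow_add, pow_mul, mul_assoc] using hk⟩

theorem ZMod.add_zmultiples_subset_of_add_image_eq [NeZero n] {C : Set (ZMod n)} {γ δ : ZMod n}
    (hγ : γ ∈ C) (hS : (δ + ·) '' C = C) :
    (γ + ·) '' (AddSubgroup.zmultiples δ : Set (ZMod n)) ⊆ C := by
  rintro _ ⟨h, hh, rfl⟩
  rw [SetLike.mem_coe, ← mem_multiples_iff_mem_zmultiples] at hh
  obtain ⟨k, rfl⟩ := hh
  induction k with
  | zero => simpa using hγ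
  | succ k ih =>
    rw [← hS]
    exact ⟨_, ih, by simp; ring⟩

/-- If `ord γ = ord δ * f`, then `γ * q ^ i` lies in the coset of `⟨δ⟩` through `γ` iff `q ^ i ≡ 1`
modulo `f`. -/
theorem ZMod.mul_pow_mem_add_zmultiples_iff_dvd [NeZero n] (γ δ : ZMod n) {f : ℕ}
    (hf : addOrderOf γ = addOrderOf δ * f) {i : ℕ} :
    γ * (q : ZMod n) ^ i ∈ (γ + ·) '' (AddSubgroup.zmultiples δ : Set (ZMod n)) ↔
      orderOf (q : ZMod f) ∣ i := by
  have h := ZMod.mul_natCast_mem_add_zmultiples_iff γ δ (a := q ^ i) (b := 1)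
  simp only [Nat.cast_pow, Nat.cast_one, mul_one] at h
  rw [h, hf, ← natCast_pow_modEq_one_iff]
  refine ⟨fun h => Nat.ModEq.mul_left_cancel' (addOrderOf_pos δ).ne' (h.trans ?_), fun h => ?_⟩
  · rw [mul_one]
  · simpa using h.mul_left' (addOrderOf δ)

theorem ZMod.exists_addOrderOf_eq_mul_of_add_image_eq [NeZero n] {γ δ : ZMod n}
    (hS : (δ + ·) '' {x : ZMod n | ∃ i : ℕ, x = γ * (q : ZMod n) ^ i} =
      {x : ZMod n | ∃ i : ℕ, x = γ * (q : ZMod n) ^ i}) :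
    ∃ f, addOrderOf γ = addOrderOf δ * f := by
  have h : δ + γ ∈ {x : ZMod n | ∃ i : ℕ, x = γ * (q : ZMod n) ^ i} :=
    hS ▸ ⟨γ, ZMod.self_mem_cyclotomicCoset, rfl⟩
  obtain ⟨i, hi⟩ := h
  refine addOrderOf_dvd_iff_nsmul_eq_zero.mpr ?_
  rw [eq_sub_of_add_eq hi, nsmul_eq_mul]
  have : (addOrderOf γ : ZMod n) * γ = 0 := by
    rw [← nsmul_eq_mul, addOrderOf_nsmul_eq_zero]
  linear_combination ((q : ZMod n) ^ i - 1) * this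

theorem ZMod.orderOf_eq_addOrderOf_mul_of_add_image_eq [NeZero n] (hco : n.Coprime q)
    {γ δ : ZMod n} {f : ℕ} (hf : addOrderOf γ = addOrderOf δ * f)
    (hS : (δ + ·) '' {x : ZMod n | ∃ i : ℕ, x = γ * (q : ZMod n) ^ i} =
      {x : ZMod n | ∃ i : ℕ, x = γ * (q : ZMod n) ^ i}) :
    orderOf (q : ZMod (addOrderOf γ)) = addOrderOf δ * orderOf (q : ZMod f) := by
  have hcoγ := hco.coprime_dvd_left (ZMod.addOrderOf_dvd_self γ)
  have hfdvd : f ∣ addOrderOf γ := hf ▸ dvd_mul_left _ _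
  have hfpos : 0 < f := Nat.pos_of_dvd_of_pos hfdvd (addOrderOf_pos γ)
  have hτpos := orderOf_natCast_pos (addOrderOf_pos γ) hcoγ
  have hspos := orderOf_natCast_pos hfpos (hcoγ.coprime_dvd_left hfdvd)
  obtain ⟨c, hc⟩ : orderOf (q : ZMod f) ∣ orderOf (q : ZMod (addOrderOf γ)) :=
    natCast_pow_modEq_one_iff.mp ((natCast_pow_modEq_one_iff.mpr dvd_rfl).of_dvd hfdvd)
  rw [hc] at hτpos
  have hcpos : 0 < c := Nat.pos_of_mul_pos_left hτpos
  set s := orderOf (q : ZMod f)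
  have hset : (γ + ·) '' (AddSubgroup.zmultiples δ : Set (ZMod n)) =
      (fun k : ℕ => γ * (q : ZMod n) ^ (s * k)) '' (Finset.range c : Set ℕ) := by
    ext x
    constructor
    · intro hx
      obtain ⟨i, rfl⟩ :=
        ZMod.add_zmultiples_subset_of_add_image_eq ZMod.self_mem_cyclotomicCoset hS hx
      obtain ⟨k, rfl⟩ := (ZMod.mul_pow_mem_add_zmultiples_iff_dvd γ δ hf).mp hx
      refine ⟨k % c, by simpa using Nat.mod_lt k hcpos,
        (ZMod.mul_pow_eq_mul_pow_iff hco γ).mpr ?_⟩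
      rw [hc]
      exact (Nat.mod_modEq k c).mul_left' s
    · rintro ⟨k, -, rfl⟩
      exact (ZMod.mul_pow_mem_add_zmultiples_iff_dvd γ δ hf).mpr (dvd_mul_right _ _)
  have hinj : Set.InjOn (fun k : ℕ => γ * (q : ZMod n) ^ (s * k)) (Finset.range c : Set ℕ) := by
    intro k hk l hl hkl
    have := (ZMod.mul_pow_eq_mul_pow_iff hco γ).mp hkl
    rw [hc] at this
    exact (Nat.ModEq.mul_left_cancel' hspos.ne' this).eq_of_lt_of_lt (by simpa using hk)
      (by simpa using hl)
  have hcard := congrArg Set.ncard hset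
  rw [ncard_add_image_zmultiples, hinj.ncard_image, Set.ncard_coe_finset,
    Finset.card_range] at hcard
  rw [hc, hcard, mul_comm]

/-- Every integer congruent to `1` modulo `f` is congruent to a power of `q ^ ord_f(q)` modulo the
order of `γ`. -/
theorem ZMod.exists_pow_modEq_of_add_image_eq [NeZero n] {γ δ : ZMod n} {f : ℕ}
    (hf : addOrderOf γ = addOrderOf δ * f)
    (hS : (δ + ·) '' {x : ZMod n | ∃ i : ℕ, x = γ * (q : ZMod n) ^ i} =
      {x : ZMod n | ∃ i : ℕ, x = γ * (q : ZMod n) ^ i}) {a : ℕ} (ha : a ≡ 1 [MOD f]) :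
    ∃ k : ℕ, a ≡ (q ^ orderOf (q : ZMod f)) ^ k [MOD addOrderOf γ] := by
  have hmem := (ZMod.mul_natCast_mem_add_zmultiples_iff γ δ (a := a) (b := 1)).mpr
    (hf ▸ ha.mul_left' _)
  rw [Nat.cast_one, mul_one] at hmem
  obtain ⟨i, hi⟩ := ZMod.add_zmultiples_subset_of_add_image_eq ZMod.self_mem_cyclotomicCoset hS hmem
  rw [hi] at hmem
  obtain ⟨k, rfl⟩ := (ZMod.mul_pow_mem_add_zmultiples_iff_dvd γ δ hf).mp hmem
  refine ⟨k, ?_⟩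
  rw [← ZMod.mul_natCast_eq_mul_natCast_iff, hi]
  push_cast
  rw [pow_mul]

theorem ZMod.prime_dvd_of_add_image_eq [NeZero n] (hco : n.Coprime q) {γ δ : ZMod n} {f : ℕ}
    (hf : addOrderOf γ = addOrderOf δ * f)
    (hS : (δ + ·) '' {x : ZMod n | ∃ i : ℕ, x = γ * (q : ZMod n) ^ i} =
      {x : ZMod n | ∃ i : ℕ, x = γ * (q : ZMod n) ^ i})
    {p : ℕ} (hp : p.Prime) (hpγ : p ∣ addOrderOf γ) : p ∣ f := by
  by_contra hpf
  obtain ⟨a, ha0, ha1⟩ := Nat.chineseRemainder ((Nat.Prime.coprime_iff_not_dvd hp).mpr hpf) 0 1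
  obtain ⟨k, hk⟩ := ZMod.exists_pow_modEq_of_add_image_eq hf hS ha1
  have hpq : p ∣ q := by
    refine hp.dvd_of_dvd_pow (hp.dvd_of_dvd_pow (m := q ^ orderOf (q : ZMod f)) (n := k) ?_)
    exact Nat.modEq_zero_iff_dvd.mp ((hk.of_dvd hpγ).symm.trans ha0)
  exact hp.one_lt.ne' (Nat.dvd_one.mp
    (hco ▸ Nat.dvd_gcd (hpγ.trans (ZMod.addOrderOf_dvd_self γ)) hpq))

theorem ZMod.pow_orderOf_mod_four_eq_one_of_add_image_eq [NeZero n] (hco : n.Coprime q)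
    {γ δ : ZMod n} {f : ℕ} (hf : addOrderOf γ = addOrderOf δ * f)
    (hS : (δ + ·) '' {x : ZMod n | ∃ i : ℕ, x = γ * (q : ZMod n) ^ i} =
      {x : ZMod n | ∃ i : ℕ, x = γ * (q : ZMod n) ^ i})
    (h8 : 8 ∣ addOrderOf γ) : q ^ orderOf (q : ZMod f) % 4 = 1 := by
  have h2f : 2 ∣ f := ZMod.prime_dvd_of_add_image_eq hco hf hS Nat.prime_two
    ((by norm_num : 2 ∣ 8).trans h8)
  have hQ : q ^ orderOf (q : ZMod f) ≡ 1 [MOD f] := natCast_pow_modEq_one_iff.mpr dvd_rfl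
  have hQ2 : q ^ orderOf (q : ZMod f) % 2 = 1 := hQ.of_dvd h2f
  by_contra h1
  have h3 : q ^ orderOf (q : ZMod f) % 4 = 3 := by omega
  have h4f : ¬ 4 ∣ f := fun h => h1 (hQ.of_dvd h)
  obtain ⟨k, hk⟩ := ZMod.exists_pow_modEq_of_add_image_eq hf hS (a := 1 + f * 2)
    (by simp [Nat.ModEq])
  have hk8 : (1 + f * 2) % 8 = (q ^ orderOf (q : ZMod f)) ^ k % 8 := hk.of_dvd h8
  set Q := q ^ orderOf (q : ZMod f)
  have hsq : Q ^ 2 ≡ 1 [MOD 8] := by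
    have : Q % 8 = 3 ∨ Q % 8 = 7 := by omega
    rcases this with h | h <;> simp [Nat.ModEq, Nat.pow_mod, h]
  rcases Nat.even_or_odd' k with ⟨l, rfl | rfl⟩
  · have : Q ^ (2 * l) ≡ 1 ^ l [MOD 8] := pow_mul Q 2 l ▸ hsq.pow l
    rw [one_pow, Nat.ModEq] at this
    omega
  · have : Q ^ (2 * l + 1) ≡ 1 ^ l * Q [MOD 8] := by
      rw [pow_succ, pow_mul]
      exact (hsq.pow l).mul_right Q
    rw [one_pow, one_mul, Nat.ModEq] at this
    omega

end Coset

theorem modEq_one_prod_primeFactors_iff {N a : ℕ} (ha : 0 < a) (hN : N ≠ 0) :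
    a ≡ 1 [MOD ∏ p ∈ N.primeFactors, p] ↔ ∀ p : ℕ, p.Prime → p ∣ N → a ≡ 1 [MOD p] := by
  constructor
  · intro h p hp hpN
    exact h.of_dvd (Finset.dvd_prod_of_mem _ (Nat.mem_primeFactors.mpr ⟨hp, hpN, hN⟩))
  · intro h
    refine ((Nat.modEq_iff_dvd' ha).mpr (Finset.prod_primes_dvd _ ?_ ?_)).symm
    · exact fun p hp => (Nat.prime_of_mem_primeFactors hp).prime
    · exact fun p hp => (Nat.modEq_iff_dvd' ha).mp
        (h p (Nat.prime_of_mem_primeFactors hp) (Nat.dvd_of_mem_primeFactors hp)).symm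

/-- Divisibility of `t` by `ω_γ`, expressed as congruences for `q ^ t`. -/
theorem omega_dvd_iff {N q t : ℕ} (hN : N ≠ 0) (hco : N.Coprime q) {m : ℕ}
    (hm : m = orderOf (q : ZMod (∏ p ∈ N.primeFactors, p))) :
    (if q ^ m % 4 = 3 ∧ 8 ∣ N then 2 * m else m) ∣ t ↔
      (∀ p : ℕ, p.Prime → p ∣ N → q ^ t ≡ 1 [MOD p]) ∧ (8 ∣ N → q ^ t % 4 = 1) := by
  rcases Nat.eq_zero_or_pos q with rfl | hq
  · obtain rfl : N = 1 := by simpa using hco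
    have hm1 : m = 1 := by
      have : Subsingleton (ZMod (∏ p ∈ Nat.primeFactors 1, p)) := by
        simpa using (inferInstance : Subsingleton (ZMod 1))
      rw [hm, Subsingleton.elim ((0 : ℕ) : ZMod (∏ p ∈ Nat.primeFactors 1, p)) 1, orderOf_one]
    simp +contextual [hm1, Nat.Prime.ne_one]
  rw [← modEq_one_prod_primeFactors_iff (pow_pos hq t) hN, natCast_pow_modEq_one_iff, ← hm]
  by_cases h8 : 8 ∣ N
  · have hodd : Odd q := by
      have : Nat.Coprime 2 q := hco.coprime_dvd_left ((by norm_num : 2 ∣ 8).trans h8)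
      exact this.odd_of_left
    have hodd' : q ^ m % 2 = 1 := Nat.odd_iff.mp hodd.pow
    simp only [h8, and_true, forall_const]
    split_ifs with h3
    · have hsq : (q ^ m) ^ 2 ≡ 1 [MOD 4] := by simp [Nat.ModEq, Nat.pow_mod, h3]
      constructor
      · rintro ⟨l, rfl⟩
        refine ⟨⟨2 * l, by ring⟩, ?_⟩
        have := hsq.pow l
        rw [one_pow, ← pow_mul, ← pow_mul, mul_left_comm, ← mul_assoc] at this
        exact this
      · rintro ⟨⟨l, rfl⟩, h1⟩
        rcases Nat.even_or_odd' l with ⟨c, rfl | rfl⟩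
        · exact ⟨c, by ring⟩
        · have h := (hsq.pow c).mul_right (q ^ m)
          rw [one_pow, one_mul, ← pow_mul, ← pow_succ, ← pow_mul, Nat.ModEq] at h
          omega
    · have h1 : q ^ m ≡ 1 [MOD 4] := by
        change _ = 1
        omega
      refine ⟨?_, And.left⟩
      rintro ⟨l, rfl⟩
      refine ⟨dvd_mul_right _ _, ?_⟩
      have := h1.pow l
      rw [one_pow, ← pow_mul] at this
      exact this
  · simp [h8]

theorem ZMod.addOrderOf_mul_pow_modEq {n q : ℕ} {γ δ : ZMod n}
    {t : ℕ} (hτ : orderOf (q : ZMod (addOrderOf γ)) = addOrderOf δ * t)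
    (hrad : ∀ p : ℕ, p.Prime → p ∣ addOrderOf γ → q ^ t ≡ 1 [MOD p])
    (h8 : 8 ∣ addOrderOf γ → q ^ t % 4 = 1) :
    addOrderOf δ * q ^ t ≡ addOrderOf δ [MOD addOrderOf γ] := by
  have key := dvd_mul_sub_one_of_dvd_pow_sub_one (N := addOrderOf γ) (Q := (q : ℤ) ^ t)
    (k := addOrderOf δ)
    (fun p hp hpγ => by
      have := (Nat.modEq_iff_dvd.mp (hrad p hp hpγ).symm)
      exact_mod_cast this)
    (fun h => by
      have : 1 ≡ q ^ t [MOD 4] := (h8 h).symm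
      exact_mod_cast Nat.modEq_iff_dvd.mp this)
    (by
      have : q ^ (addOrderOf δ * t) ≡ 1 [MOD addOrderOf γ] :=
        natCast_pow_modEq_one_iff.mpr hτ.dvd
      have := Nat.modEq_iff_dvd.mp this.symm
      rw [mul_comm, pow_mul] at this
      exact_mod_cast this)
  refine (Nat.modEq_iff_dvd.mpr ?_).symm
  push_cast
  rwa [mul_sub, mul_one] at key

/-- Translation by `δ` stabilizes the `q`-cyclotomic coset of `γ` iff the order of `δ` divides the
size of the coset and the quotient `t` satisfies `q ^ t ≡ 1` modulo the primes dividing the order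
of `γ`, and modulo `4` when `8` divides this order. -/
theorem ZMod.add_image_cyclotomicCoset_eq_iff {n q : ℕ} [NeZero n] (hco : n.Coprime q)
    {γ δ : ZMod n} :
    (δ + ·) '' {x : ZMod n | ∃ i : ℕ, x = γ * (q : ZMod n) ^ i} =
      {x : ZMod n | ∃ i : ℕ, x = γ * (q : ZMod n) ^ i} ↔
    ∃ t, orderOf (q : ZMod (addOrderOf γ)) = addOrderOf δ * t ∧
      (∀ p : ℕ, p.Prime → p ∣ addOrderOf γ → q ^ t ≡ 1 [MOD p]) ∧
      (8 ∣ addOrderOf γ → q ^ t % 4 = 1) := by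
  constructor
  · intro hS
    obtain ⟨f, hf⟩ := ZMod.exists_addOrderOf_eq_mul_of_add_image_eq hS
    exact ⟨_, ZMod.orderOf_eq_addOrderOf_mul_of_add_image_eq hco hf hS,
      fun p hp hpγ => (natCast_pow_modEq_one_iff.mpr dvd_rfl).of_dvd
        (ZMod.prime_dvd_of_add_image_eq hco hf hS hp hpγ),
      ZMod.pow_orderOf_mod_four_eq_one_of_add_image_eq hco hf hS⟩
  · rintro ⟨t, hτ, hrad, h8⟩
    exact ZMod.add_image_cyclotomicCoset_of_modEq hco γ δ hτ
      (ZMod.addOrderOf_mul_pow_modEq hτ hrad h8)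


/-- For a positive divisor `d` of `n`, the image of `d` in `ZMod n` stabilizes
the cyclotomic coset `c_{n/q}(γ)` iff `n/d ∣ τ` and `ω_γ ∣ d·τ/n`; and in that case, with
`t = d·τ/n`, the unique partition of `c_{n/q}(γ)` into equal-difference sets with common
difference `d` is the disjoint union of the `q^t`-cyclotomic cosets `c_{n/q^t}(γ·q^i)`,
`0 ≤ i < t`. -/
theorem med_of_cyclotomic_coset_iff (q n : ℕ) (hq : IsPrimePow q) (hn : 0 < n)
    (hco : Nat.Coprime n q) (γ : ZMod n)
    (C : Set (ZMod n)) (hC : C = {x : ZMod n | ∃ i : ℕ, x = γ * (q : ZMod n) ^ i})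
    (τ : ℕ) (hτ : τ = Nat.card C)
    (nγ : ℕ) (hnγ : nγ = addOrderOf γ)
    (r : ℕ) (hr : r = ∏ p ∈ nγ.primeFactors, p)
    (ω : ℕ) (hω : ω = if q ^ orderOf (q : ZMod r) % 4 = 3 ∧ 8 ∣ nγ
      then 2 * orderOf (q : ZMod r) else orderOf (q : ZMod r))
    (d : ℕ) (hd : 0 < d) (hdn : d ∣ n) :
    ((((d : ZMod n)) + ·) '' C = C ↔ (n / d ∣ τ ∧ ω ∣ d * τ / n)) ∧
    ((((d : ZMod n)) + ·) '' C = C →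
      (∀ i < d * τ / n, ∃ γ₀ : ZMod n,
        {x : ZMod n | ∃ k : ℕ, x = γ * (q : ZMod n) ^ i * ((q : ZMod n) ^ (d * τ / n)) ^ k} =
          (γ₀ + ·) '' ((AddSubgroup.closure {((d : ZMod n))} :
            AddSubgroup (ZMod n)) : Set (ZMod n))) ∧
      (∀ i < d * τ / n, ∀ j < d * τ / n, i ≠ j →
        Disjoint
          {x : ZMod n | ∃ k : ℕ, x = γ * (q : ZMod n) ^ i * ((q : ZMod n) ^ (d * τ / n)) ^ k}
          {x : ZMod n | ∃ k : ℕ, x = γ * (q : ZMod n) ^ j * ((q : ZMod n) ^ (d * τ / n)) ^ k}) ∧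
      C = ⋃ i ∈ Finset.range (d * τ / n),
        {x : ZMod n | ∃ k : ℕ, x = γ * (q : ZMod n) ^ i * ((q : ZMod n) ^ (d * τ / n)) ^ k}) := by
  have : NeZero n := ⟨hn.ne'⟩
  obtain ⟨e, rfl⟩ := hdn
  have he : 0 < e := Nat.pos_of_mul_pos_left hn
  have hord : addOrderOf (d : ZMod (d * e)) = e := by
    rw [ZMod.addOrderOf_coe d hn.ne', Nat.gcd_mul_right_left, Nat.mul_div_cancel_left e hd]
  rw [← AddSubgroup.zmultiples_eq_closure]
  have hτ' : τ = orderOf (q : ZMod (addOrderOf γ)) := by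
    rw [hτ, hC, ZMod.card_cyclotomicCoset hn hco]
  have hcoγ := hco.coprime_dvd_left (ZMod.addOrderOf_dvd_self γ)
  have hω' (t : ℕ) := omega_dvd_iff (t := t) (addOrderOf_pos γ).ne' hcoγ rfl
  subst hnγ hr
  simp only [← hω] at hω'
  have hstable := ZMod.add_image_cyclotomicCoset_eq_iff hco (γ := γ)
    (δ := (d : ZMod (d * e)))
  simp only [← hC, hord, ← hτ', ← hω'] at hstable
  rw [Nat.mul_div_cancel_left e hd, Nat.mul_div_mul_left _ _ hd]
  refine ⟨hstable.trans ?_, fun hS => ?_⟩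
  · constructor
    · rintro ⟨t, rfl, ht⟩
      exact ⟨dvd_mul_right _ _, by rwa [Nat.mul_div_cancel_left t he]⟩
    · rintro ⟨⟨t, rfl⟩, ht⟩
      exact ⟨t, rfl, by rwa [Nat.mul_div_cancel_left t he] at ht⟩
  obtain ⟨t, ht, hωt⟩ := hstable.mp hS
  rw [ht, Nat.mul_div_cancel_left t he]
  obtain ⟨hrad, h8⟩ := (hω' t).mp hωt
  have hτt : orderOf (q : ZMod (addOrderOf γ)) = addOrderOf (d : ZMod (d * e)) * t := by
    rw [hord, ← ht, hτ']
  have htpos : 0 < t := by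
    have := orderOf_natCast_pos (addOrderOf_pos γ) hcoγ
    rw [hτt] at this
    exact Nat.pos_of_mul_pos_left this
  have hterm (i k : ℕ) : γ * (q : ZMod (d * e)) ^ i * ((q : ZMod (d * e)) ^ t) ^ k =
      γ * (q : ZMod (d * e)) ^ (i + t * k) := by
    rw [pow_add, pow_mul, mul_assoc]
  refine ⟨fun i _ => ⟨_, ZMod.cyclotomicCoset_pow_eq_add_zmultiples hco γ _ hτt
    (ZMod.addOrderOf_mul_pow_modEq hτt hrad h8) i⟩, fun i hi j hj hij => ?_, ?_⟩
  · rw [Set.disjoint_left]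
    rintro _ ⟨k, rfl⟩ ⟨l, hl⟩
    rw [hterm, hterm, ZMod.mul_pow_eq_mul_pow_iff hco, hτt] at hl
    have h := hl.of_dvd (dvd_mul_left t _)
    refine hij (Nat.ModEq.eq_of_lt_of_lt (m := t) ?_ hi hj)
    simpa [Nat.ModEq] using h
  · ext x
    simp only [hC, Set.mem_iUnion, Finset.mem_range, Set.mem_ofPred_eq, exists_prop, hterm]
    constructor
    · rintro ⟨i, rfl⟩
      exact ⟨i % t, Nat.mod_lt i htpos, i / t, by rw [Nat.mod_add_div]⟩
    · rintro ⟨i, -, k, rfl⟩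
      exact ⟨_, rfl⟩
end

section
/- Let K be a field containing a primitive n-th root of unity ζ, let d be a positive divisor of n, let H be the additive subgroup of ZMod n generated by the image of d, and suppose the finite subset T ⊆ ZMod n is the disjoint union of the cosets γ_i + H for i in a finite index set I (with γ_i + H pairwise disjoint). Then the polynomial f_T factors into binomials of equal degree: ∏_{γ ∈ T} (X − ζ^{γ̃}) = ∏_{i ∈ I} (X^{n/d} − ζ^{γ̃_i·(n/d)}) in K[X]. -/
open Polynomial

/-- The map `x ↦ ζ ^ x.val` on `ZMod n` is multiplicative when `ζ ^ n = 1`. -/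
lemma pow_zmod_val_add_natCast {M : Type*} [Monoid M] {n : ℕ} {ζ : M} (hζ : ζ ^ n = 1)
    [NeZero n] (g : ZMod n) (k : ℕ) : ζ ^ (g + k).val = ζ ^ k * ζ ^ g.val := by
  rw [← pow_add, add_comm k, pow_eq_pow_mod (g.val + k) hζ, ZMod.val_add, ZMod.val_natCast,
    Nat.add_mod_mod]

lemma ZMod.mem_closure_natCast_iff {n d : ℕ} (hn : 0 < n) (hdn : d ∣ n) (x : ZMod n) :
    x ∈ AddSubgroup.closure {(d : ZMod n)} ↔ ∃ k < n / d, ((d * k : ℕ) : ZMod n) = x := by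
  have hm : 0 < n / d := Nat.div_pos (Nat.le_of_dvd hn hdn) (Nat.pos_of_dvd_of_pos hdn hn)
  rw [AddSubgroup.mem_closure_singleton]
  constructor
  · rintro ⟨z, rfl⟩
    have h0 : 0 ≤ z % (n / d : ℕ) := Int.emod_nonneg _ (by exact_mod_cast hm.ne')
    have h1 : z % (n / d : ℕ) < (n / d : ℕ) := Int.emod_lt_of_pos _ (by exact_mod_cast hm)
    obtain ⟨k, hk⟩ := Int.eq_ofNat_of_zero_le h0
    refine ⟨k, by omega, ?_⟩
    have hz : z = k + (n / d : ℕ) * (z / (n / d : ℕ)) := by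
      rw [← hk, Int.emod_add_mul_ediv]
    have hdm : (d : ZMod n) * ((n / d : ℕ) : ZMod n) = 0 := by
      rw [← Nat.cast_mul, Nat.mul_div_cancel' hdn, ZMod.natCast_self]
    rw [zsmul_eq_mul, hz, Int.cast_add, Int.cast_mul, Int.cast_natCast, Int.cast_natCast,
      Nat.cast_mul]
    linear_combination -((z / (n / d : ℕ) : ℤ) : ZMod n) * hdm
  · rintro ⟨k, -, rfl⟩
    exact ⟨k, by simp [mul_comm]⟩

lemma ZMod.injOn_add_natCast_mul {n d : ℕ} (hd : 0 < d) (hdn : d ∣ n) (g : ZMod n) :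
    Set.InjOn (fun k : ℕ ↦ g + ((d * k : ℕ) : ZMod n)) (Finset.range (n / d)) := by
  intro a ha b hb h
  have hlt : ∀ k ∈ Finset.range (n / d), d * k < n := fun k hk ↦
    (Nat.mul_lt_mul_of_pos_left (Finset.mem_range.mp hk) hd).trans_eq (Nat.mul_div_cancel' hdn)
  have h' := (ZMod.natCast_eq_natCast_iff' _ _ _).mp (add_left_cancel h)
  rw [Nat.mod_eq_of_lt (hlt a ha), Nat.mod_eq_of_lt (hlt b hb)] at h'
  exact Nat.eq_of_mul_eq_mul_left hd h'

/-- If the finite subset `T ⊆ ZMod n` is the disjoint union of the cosets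
`γ i + H`, `i ∈ I`, where `H` is the additive subgroup of `ZMod n` generated by the image of
a positive divisor `d` of `n`, then `f_T = ∏_{x ∈ T} (X - ζ^x̃)` factors into binomials of
equal degree: `f_T = ∏_{i ∈ I} (X^(n/d) - ζ^(γ̃_i·(n/d)))`. -/
theorem med_gives_binomial_factorization {K : Type*} [Field K]
    (n : ℕ) (hn : 0 < n) (ζ : K) (hζ : IsPrimitiveRoot ζ n)
    (d : ℕ) (hd : 0 < d) (hdn : d ∣ n)
    (H : AddSubgroup (ZMod n)) (hH : H = AddSubgroup.closure {((d : ZMod n))})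
    {ι : Type*} [DecidableEq ι] (I : Finset ι) (γ : ι → ZMod n)
    (T : Finset (ZMod n))
    (hT : (T : Set (ZMod n)) = ⋃ i ∈ I, (γ i + ·) '' (H : Set (ZMod n)))
    (hdisj : ∀ i ∈ I, ∀ j ∈ I, i ≠ j →
      Disjoint ((γ i + ·) '' (H : Set (ZMod n))) ((γ j + ·) '' (H : Set (ZMod n)))) :
    ∏ x ∈ T, (X - C (ζ ^ x.val)) =
      ∏ i ∈ I, (X ^ (n / d) - C (ζ ^ ((γ i).val * (n / d)))) := by
  subst hH
  have : NeZero n := ⟨hn.ne'⟩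
  let E : ι → Finset (ZMod n) := fun i ↦
    (Finset.range (n / d)).image fun k ↦ γ i + ((d * k : ℕ) : ZMod n)
  have hE : ∀ i, (E i : Set (ZMod n)) =
      (γ i + ·) '' (AddSubgroup.closure {(d : ZMod n)} : Set (ZMod n)) := by
    intro i
    ext x
    simp only [E, Finset.coe_image, Set.mem_image, Finset.coe_range, Set.mem_Iio,
      SetLike.mem_coe, ZMod.mem_closure_natCast_iff hn hdn]
    grind
  have hTE : T = I.biUnion E := by
    rw [← Finset.coe_inj, hT, Finset.coe_biUnion]
    simp only [hE, Finset.mem_coe]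
  have hEdisj : (I : Set ι).PairwiseDisjoint E := by
    intro i hi j hj hij
    simpa only [Function.onFun, ← Finset.disjoint_coe, hE] using hdisj i hi j hj hij
  rw [hTE, Finset.prod_biUnion hEdisj]
  refine Finset.prod_congr rfl fun i _ ↦ ?_
  rw [Finset.prod_image (ZMod.injOn_add_natCast_mul hd hdn (γ i)),
    X_pow_sub_C_eq_prod (hζ.pow hn (Nat.mul_div_cancel' hdn).symm)
      (Nat.div_pos (Nat.le_of_dvd hn hdn) hd) (pow_mul ζ (γ i).val (n / d)).symm]
  simp only [pow_zmod_val_add_natCast hζ.pow_eq_one, pow_mul]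
end
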